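/- Let X be an implicative-orthomodular algebra. Then the relation ≤_Q is transitive: for all x, y, z ∈ X, if x ≤_Q y and y ≤_Q z then x ≤_Q z. -/

import Mathlib

/-!
Write `a·b := (a → b*)*`; by exchange and involutivity this is a commutative associative product.
By definition `x ≤_Q y` says `x = y·(y → x)`, and the point is that in an IOM algebra this holds as
soon as `x = y·w` for *some* `w` (`InvBE.leQ_of_neg_eq`). Transitivity is then associativity of the
product: `x = y·w` and `y = z·v` give `x = z·(v·w)`.
-/

/-- An involutive BE algebra `(X, →, 0, 1)`. -/
structure InvBE (X : Type*) where
  imp : X → X → X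
  one : X
  zero : X
  imp_self : ∀ x, imp x x = one
  imp_one : ∀ x, imp x one = one
  one_imp : ∀ x, imp one x = x
  exchange : ∀ x y z, imp x (imp y z) = imp y (imp x z)
  zero_imp : ∀ x, imp zero x = one
  imp_involutive : ∀ x, imp (imp x zero) zero = x

namespace InvBE

variable {X : Type*} (A : InvBE X)

/-- `x* := x → 0`. -/
def neg (x : X) : X := A.imp x A.zero

/-- `x ⊓ y := ((x* → y*) → y*)*`. -/
def inf (x y : X) : X := A.neg (A.imp (A.imp (A.neg x) (A.neg y)) (A.neg y))

/-- `x ∪ y := (x → y) → y`. -/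
def sup (x y : X) : X := A.imp (A.imp x y) y

/-- `x ⊙ y := (x → y*)*`. -/
def odot (x y : X) : X := A.neg (A.imp x (A.neg y))

/-- `x ⊕ y := (x* ⊙ y*)*`. -/
def oplus (x y : X) : X := A.neg (A.odot (A.neg x) (A.neg y))

/-- `x ≤_Q y` iff `x = x ⊓ y`. -/
def leQ (x y : X) : Prop := x = A.inf x y

/-- `x ≤ y` iff `x → y = 1`. -/
def le (x y : X) : Prop := A.imp x y = A.one

/-- (IOM): `x ⊓ (y → x) = x` for all `x, y`. -/
def IOM : Prop := ∀ x y, A.inf x (A.imp y x) = x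

/-- (QW): `x → ((x ⊓ y) ⊓ (z ⊓ x)) = (x → y) ⊓ (x → z)` for all `x, y, z`. -/
def QW : Prop :=
  ∀ x y z, A.imp x (A.inf (A.inf x y) (A.inf z x)) = A.inf (A.imp x y) (A.imp x z)

/-- A filter: nonempty, closed under `⊙`, upward closed for `≤_Q`. -/
def IsFilter (F : Set X) : Prop :=
  F.Nonempty ∧ (∀ x ∈ F, ∀ y ∈ F, A.odot x y ∈ F) ∧
    (∀ x ∈ F, ∀ y : X, A.leQ x y → y ∈ F)

/-- A deductive system: contains `1` and is closed under modus ponens. -/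
def IsDS (F : Set X) : Prop :=
  A.one ∈ F ∧ ∀ x y : X, x ∈ F → A.imp x y ∈ F → y ∈ F

/-- `pow x n` is the `⊙`-product of `n + 1` copies of `x`, i.e. `x^(n+1)`. -/
def pow (x : X) : ℕ → X
  | 0 => x
  | n + 1 => A.odot x (pow x n)

/-- A maximal filter: proper and not contained in any other proper filter. -/
def IsMaximalFilter (F : Set X) : Prop :=
  A.IsFilter F ∧ F ≠ Set.univ ∧
    ∀ G : Set X, A.IsFilter G → F ⊆ G → G ≠ Set.univ → G = F

/-- A strongly maximal filter: for every `x ∉ F` there is `n ≥ 1` with `(xⁿ)* ∈ F`. -/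
def IsStronglyMaximalFilter (F : Set X) : Prop :=
  A.IsFilter F ∧ ∀ x : X, x ∉ F → ∃ n : ℕ, A.neg (A.pow x n) ∈ F

/-- `x ≡_F y` iff there is `f` with `x, y ≤_Q f` and `f → x, f → y ∈ F`. -/
def cong (F : Set X) (x y : X) : Prop :=
  ∃ f : X, A.leQ x f ∧ A.leQ y f ∧ A.imp f x ∈ F ∧ A.imp f y ∈ F

end InvBE

namespace InvBE

variable {X : Type*} (A : InvBE X)

theorem neg_neg' (x : X) : A.neg (A.neg x) = x := A.imp_involutive x

theorem imp_neg_comm (x y : X) : A.imp x (A.neg y) = A.imp y (A.neg x) :=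
  A.exchange x y A.zero

theorem neg_imp_neg (x y : X) : A.imp (A.neg x) (A.neg y) = A.imp y x := by
  rw [imp_neg_comm, neg_neg']

/-- Any `x` of the form `z·p` (written dually as `x* = p → z*`) satisfies `x ≤_Q z`. -/
theorem leQ_of_neg_eq (hA : A.IOM) {x z p : X} (h : A.neg x = A.imp p (A.neg z)) :
    A.leQ x z := by
  -- The law at `z*` and `p` says that `z*` lies below `x*`.
  have h1 : A.imp (A.imp z x) x = z := by
    have := congrArg A.neg (hA (A.neg z) p)
    rw [← h] at this
    simpa only [inf, neg_neg'] using this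
  -- At `x` and `z`, the inner implication `x* → (z → x)*` is the expression computed in `h1`.
  have h2 := hA x z
  unfold inf at h2
  rw [neg_imp_neg, h1] at h2
  unfold leQ inf
  rw [neg_imp_neg, imp_neg_comm, h2]

end InvBE

/-- In an IOM algebra, the relation `≤_Q` is transitive. -/
theorem stmt_11 {X : Type*} (A : InvBE X) (hA : A.IOM) :
    ∀ x y z : X, A.leQ x y → A.leQ y z → A.leQ x z := by
  intro x y z hxy hyz
  obtain ⟨p, hp⟩ : ∃ p, A.neg x = A.imp p (A.neg y) :=
    ⟨_, (congrArg A.neg hxy).trans (A.neg_neg' _)⟩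
  obtain ⟨q, hq⟩ : ∃ q, A.neg y = A.imp q (A.neg z) :=
    ⟨_, (congrArg A.neg hyz).trans (A.neg_neg' _)⟩
  -- The multiplier for `x` over `z` is the product `p·q = (p → q*)*`.
  refine A.leQ_of_neg_eq hA (p := A.neg (A.imp p (A.neg q))) ?_
  rw [hp, hq, A.imp_neg_comm q z, A.exchange, A.neg_imp_neg]
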